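/- arXiv:1906.02883 — 6 statements merged into one kernel-verified Lean document; each statement's English description precedes it below -/
import Mathlib

section
/- Let H be a real inner product space, let α ∈ [0,1) and η ∈ (0,1), let (g_n) and (D_n) be sequences in H, (t_n) a sequence of positive reals, and (E_n) a sequence of reals that is bounded below. Define Q_0 = 1, C_0 = E_0, and for n ≥ 1, Q_n = α·Q_{n−1} + 1 and C_n = (α·Q_{n−1}·C_{n−1} + E_n)/Q_n. Assume: (i) ⟨g_n, D_n⟩ < 0 for all n; (ii) there exists a > 0 such that limsup_{n→∞} (−⟨g_n, D_n⟩ / ‖g_n‖^a) > 0; (iii) E_{n+1} − C_n ≤ η·t_n·⟨g_n, D_n⟩ for all n; (iv) liminf_{n→∞} t_n > 0. Then liminf_{n→∞} ‖g_n‖ = 0. -/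
/-!
The averages `C n` form an antitone sequence. Indeed `C (n + 1)` is a convex combination of `C n`
and `E (n + 1)`, the latter with weight `1 / Q (n + 1)`, so the sufficient decrease condition gives
`C n - C (n + 1) ≥ η * t n * (-⟪g n, D n⟫) / Q (n + 1)`, where `Q (n + 1) ≤ 1 / (1 - α)`. A lower
bound of `E` is a lower bound of `C`, hence `C` converges and its consecutive differences tend to
`0`. Since `t` is eventually bounded away from `0`, this forces `⟪g n, D n⟫ → 0`. Along the
infinitely many indices at which `-⟪g n, D n⟫ / ‖g n‖ ^ a` exceeds a fixed positive constant,
`‖g n‖ ^ a`, and therefore `‖g n‖`, becomes arbitrarily small.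

The `limsup` and `liminf` are those of the conditionally complete lattice `ℝ`, with value `0` when
the defining set is empty or unbounded. Positivity of `limsup` or `liminf` is used only to extract
a frequent or eventual lower bound, and the conclusion is derived from the fact that
`‖g n‖` is frequently smaller than any `ε > 0`, so that these default values play no role.
-/

open Filter
open scoped RealInnerProductSpace

/-- A sequence of nonnegative reals with arbitrarily small terms has `liminf` zero. -/
lemma liminf_eq_zero_of_frequently_lt {u : ℕ → ℝ} (h0 : ∀ n, 0 ≤ u n)
    (h : ∀ ε > 0, ∃ᶠ n in atTop, u n < ε) : liminf u atTop = 0 := by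
  rw [liminf_eq]
  have hub : ∀ b ∈ {b | ∀ᶠ n in atTop, b ≤ u n}, b ≤ 0 := by
    intro b hb
    by_contra! hpos
    obtain ⟨n, hn, hn'⟩ := ((h b hpos).and_eventually hb).exists
    linarith
  exact IsGreatest.csSup_eq ⟨Eventually.of_forall h0, hub⟩

lemma frequently_lt_of_pos_limsup {u : ℕ → ℝ} (h0 : ∀ n, 0 ≤ u n)
    (h : 0 < limsup u atTop) : ∃ s > 0, ∃ᶠ n in atTop, s < u n := by
  refine ⟨limsup u atTop / 2, by linarith, fun hcon => ?_⟩
  have hev : ∀ᶠ n in atTop, u n ≤ limsup u atTop / 2 := hcon.mono fun n hn => not_lt.mp hn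
  have hbdd : BddBelow {b | ∀ᶠ n in atTop, u n ≤ b} := by
    refine ⟨0, fun b hb => ?_⟩
    obtain ⟨n, hn⟩ := hb.exists
    exact (h0 n).trans hn
  have hle : limsup u atTop ≤ limsup u atTop / 2 := by
    conv_lhs => rw [limsup_eq]
    exact csInf_le hbdd hev
  linarith

lemma eventually_le_of_pos_liminf {u : ℕ → ℝ} (h0 : ∀ n, 0 ≤ u n)
    (h : 0 < liminf u atTop) : ∃ c > 0, ∀ᶠ n in atTop, c ≤ u n := by
  rw [liminf_eq] at h
  obtain ⟨c, hc, hpos⟩ := exists_lt_of_lt_csSup (s := {b | ∀ᶠ n in atTop, b ≤ u n})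
    ⟨0, Eventually.of_forall h0⟩ h
  exact ⟨c, hpos, hc⟩

/-- Abstract sequence form of the convergence theorem for line search methods with
orthogonality constraints (Theorem 2.1). -/
theorem adaptive_linesearch_abstract_convergence
    {H : Type*} [NormedAddCommGroup H] [InnerProductSpace ℝ H]
    (α η : ℝ) (hα : α ∈ Set.Ico (0 : ℝ) 1) (hη : η ∈ Set.Ioo (0 : ℝ) 1)
    (g D : ℕ → H) (t : ℕ → ℝ) (E : ℕ → ℝ)
    (ht : ∀ n, 0 < t n) (hEbdd : BddBelow (Set.range E))
    (Q C : ℕ → ℝ)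
    (hQ0 : Q 0 = 1) (hC0 : C 0 = E 0)
    (hQ : ∀ n : ℕ, Q (n + 1) = α * Q n + 1)
    (hC : ∀ n : ℕ, C (n + 1) = (α * Q n * C n + E (n + 1)) / Q (n + 1))
    (hdesc : ∀ n, ⟪g n, D n⟫ < 0)
    (hratio : ∃ a : ℝ, 0 < a ∧
      0 < limsup (fun n => -⟪g n, D n⟫ / ‖g n‖ ^ a) atTop)
    (harmijo : ∀ n, E (n + 1) - C n ≤ η * t n * ⟪g n, D n⟫)
    (hliminf : 0 < liminf t atTop) :
    liminf (fun n => ‖g n‖) atTop = 0 := by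
  obtain ⟨hα0, hα1⟩ := hα
  obtain ⟨hη0, -⟩ := hη
  obtain ⟨a, ha, hlim⟩ := hratio
  obtain ⟨m, hm⟩ := hEbdd
  have hEm : ∀ n, m ≤ E n := fun n => hm ⟨n, rfl⟩
  have hQ1 : ∀ n, 1 ≤ Q n := by
    intro n
    induction n with
    | zero => exact hQ0.ge
    | succ k ih =>
      have := mul_nonneg hα0 (zero_le_one.trans ih)
      rw [hQ]
      linarith
  -- `1 / (1 - α)` is the fixed point of `q ↦ α * q + 1`.
  have hQub : ∀ n, (1 - α) * Q n ≤ 1 := by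
    intro n
    induction n with
    | zero => rw [hQ0]; linarith
    | succ k ih =>
      rw [hQ]
      nlinarith
  have hCQ : ∀ n, Q (n + 1) * C (n + 1) = α * Q n * C n + E (n + 1) := by
    intro n
    rw [hC, mul_div_cancel₀ _ (by linarith [hQ1 (n + 1)])]
  have hCm : ∀ n, m ≤ C n := by
    intro n
    induction n with
    | zero => rw [hC0]; exact hEm 0
    | succ k ih =>
      have hQpos : 0 < Q (k + 1) := by linarith [hQ1 (k + 1)]
      have hαQ : 0 ≤ α * Q k := mul_nonneg hα0 (by linarith [hQ1 k])
      refine le_of_mul_le_mul_left ?_ hQpos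
      rw [hCQ, hQ]
      nlinarith [mul_le_mul_of_nonneg_left ih hαQ, hEm (k + 1)]
  have hdec : ∀ n, (1 - α) * (η * t n * -⟪g n, D n⟫) ≤ C n - C (n + 1) := by
    intro n
    have hQpos : 0 < Q (n + 1) := by linarith [hQ1 (n + 1)]
    have hx : 0 ≤ η * t n * -⟪g n, D n⟫ :=
      mul_nonneg (mul_nonneg hη0.le (ht n).le) (by linarith [hdesc n])
    have hmul : η * t n * -⟪g n, D n⟫ ≤ Q (n + 1) * (C n - C (n + 1)) := by
      rw [mul_sub, hCQ, hQ]
      linarith [harmijo n]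
    refine le_of_mul_le_mul_left ?_ hQpos
    refine le_trans ?_ hmul
    calc Q (n + 1) * ((1 - α) * (η * t n * -⟪g n, D n⟫))
        = ((1 - α) * Q (n + 1)) * (η * t n * -⟪g n, D n⟫) := by ring
      _ ≤ 1 * (η * t n * -⟪g n, D n⟫) := mul_le_mul_of_nonneg_right (hQub _) hx
      _ = η * t n * -⟪g n, D n⟫ := one_mul _
  have hanti : Antitone C := by
    refine antitone_nat_of_succ_le fun n => ?_
    have : 0 ≤ (1 - α) * (η * t n * -⟪g n, D n⟫) :=
      mul_nonneg (by linarith)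
        (mul_nonneg (mul_nonneg hη0.le (ht n).le) (by linarith [hdesc n]))
    linarith [hdec n]
  have hCconv := tendsto_atTop_ciInf hanti ⟨m, by rintro _ ⟨n, rfl⟩; exact hCm n⟩
  have hdiff : Tendsto (fun n => C n - C (n + 1)) atTop (nhds 0) := by
    simpa using hCconv.sub (hCconv.comp (tendsto_add_atTop_nat 1))
  obtain ⟨c, hc, htc⟩ := eventually_le_of_pos_liminf (fun n => (ht n).le) hliminf
  obtain ⟨s, hs, hfreq⟩ := frequently_lt_of_pos_limsup
    (fun n => div_nonneg (by linarith [hdesc n]) (Real.rpow_nonneg (norm_nonneg (g n)) a)) hlim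
  refine liminf_eq_zero_of_frequently_lt (fun n => norm_nonneg _) fun ε hε => ?_
  -- The threshold is chosen so that `s * ‖g n‖ ^ a < -⟪g n, D n⟫ < s * ε ^ a` for suitable `n`.
  have hK : 0 < (1 - α) * (η * c) := mul_pos (by linarith) (mul_pos hη0 hc)
  have hsε : 0 < s * ε ^ a := mul_pos hs (Real.rpow_pos_of_pos hε a)
  have hsmall := hdiff.eventually_lt_const (mul_pos hK hsε)
  refine (hfreq.and_eventually (hsmall.and htc)).mono ?_
  rintro n ⟨hn, hCn, htn⟩
  have hp : 0 < -⟪g n, D n⟫ := by linarith [hdesc n]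
  have hlt : -⟪g n, D n⟫ < s * ε ^ a := by
    refine lt_of_mul_lt_mul_left ?_ hK.le
    refine lt_of_le_of_lt ?_ ((hdec n).trans_lt hCn)
    rw [mul_assoc]
    gcongr
  have hg : 0 < ‖g n‖ := norm_pos_iff.mpr fun h0 => by simp [h0] at hp
  rw [lt_div_iff₀ (Real.rpow_pos_of_pos hg a)] at hn
  have hpow : ‖g n‖ ^ a < ε ^ a := lt_of_mul_lt_mul_left (hn.trans hlt) hs.le
  exact (Real.rpow_lt_rpow_iff hg.le hε.le ha).mp hpow
end

section
/- Fix positive integers m, N and work with m×N real matrices equipped with the Frobenius inner product ⟨X, Y⟩ = tr(XᵀY). Let S = {U : UᵀU = I_N} be the Stiefel manifold and, for U ∈ S, call D tangent at U if UᵀD = 0. Let E be a continuously differentiable real-valued function on m×N matrices with gradient ∇E (with respect to the Frobenius inner product), and set ∇_G E(U) = ∇E(U) − U(Uᵀ∇E(U)). Let ortho(U, D, t) be a map, defined for U ∈ S, D tangent at U, and t ∈ ℝ, such that: ortho(U, D, t) ∈ S; ortho(U, D, 0) = U; for each fixed (U, D) the curve t ↦ ortho(U, D, t) is differentiable with derivative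 ∂_t ortho(U, D, t), ∂_t ortho(U, D, 0) = D, and both (U, D, t) ↦ ortho(U, D, t) and (U, D, t) ↦ ∂_t ortho(U, D, t) are jointly continuous. Let η ∈ (0,1), α ∈ [0,1), k ∈ (0,1), t_min > 0, and let sequences U_n ∈ S, D_n tangent at U_n, and t_n > 0 satisfy: U_{n+1} = ortho(U_n, D_n, t_n); ⟨∇_G E(U_n), D_n⟩ < 0 for all n; there exist a > 0, δ > 0, C > 0 and a strictly increasing sequence (n_j) with lim_{j→∞} (−⟨∇_G E(U_{n_j}), D_{n_j}⟩ / ‖∇_G E(U_{n_j})‖^a) = δ and ‖D_{n_j}‖ ≤ C for all j; E(ortho(U_n, D_n, t_n)) − C_n ≤ η·t_n·⟨∇_G E(U_n), D_n⟩ for all n, where C_0 = E(U_0), Q_0 = 1, Q_n = α·Q_{n−1} + 1, C_n = (α·Q_{n−1}·C_{n−1} + E(U_n))/Q_n; and for every n, either t_n ≥ t_min or E(ortho(U_n, D_n, t_n/k)) − C_n > η·(t_n/k)·⟨∇_G E(U_n), D_n⟩. Then either ∇_G E(U_n) = 0 for some n, or liminf_{n→∞} ‖∇_G E(U_n)‖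 = 0. -/
/-!
Write `g n = -⟨∇_G E(U n), D n⟩ > 0`. The argument combines two facts.

* The reference values `Cs n` dominate `E (U n)` and, since `Q n ≤ 1 / (1 - α)`, decrease by at
  least `(1 - α) η t n g n` at each step. As `E` is bounded below on the compact Stiefel manifold,
  `Cs` converges and `t n * g n → 0` (`zhangHager_tendsto_zero`).
* If `‖∇_G E(U n)‖` stayed away from zero, gradient-relatedness would keep `g` away from zero
  along the subsequence, so `t → 0` there and eventually every step results from a
  rejected trial `t n / k → 0`. The mean value theorem turns the rejection into
  `⟨∇E(ortho U D ξ), ∂ₜ ortho U D ξ⟩ > η ⟨∇E(U), D⟩` for some `ξ` in `(0, t n / k)`. In the limit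
  along a convergent subsequence of the pairs `(U, D)` this reads `h ≥ η h` for a slope `h < 0`,
  which is impossible since `η < 1` (`false_of_rejected_steps`).

On tangent directions `⟨∇_G E(U), D⟩ = ⟨∇E(U), D⟩`, so the Grassmann gradient can be replaced by
the Euclidean one throughout.
-/

open Matrix Filter

attribute [local instance] Matrix.normedAddCommGroup Matrix.normedSpace

/-- Frobenius inner product of two `m × N` real matrices. -/
noncomputable def frobInner {m N : ℕ} (X Y : Matrix (Fin m) (Fin N) ℝ) : ℝ :=
  Matrix.trace (Xᵀ * Y)

/-- Frobenius norm of an `m × N` real matrix. -/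
noncomputable def frobNorm {m N : ℕ} (X : Matrix (Fin m) (Fin N) ℝ) : ℝ :=
  Real.sqrt (Matrix.trace (Xᵀ * X))

/-- The continuous linear functional `V ↦ ⟨G, V⟩` (Frobenius inner product). -/
noncomputable def frobInnerCLM {m N : ℕ} (G : Matrix (Fin m) (Fin N) ℝ) :
    Matrix (Fin m) (Fin N) ℝ →L[ℝ] ℝ :=
  LinearMap.toContinuousLinearMap
    { toFun := fun V => frobInner G V
      map_add' := by
        intro x y; simp [frobInner, Matrix.mul_add]
      map_smul' := by
        intro c x; simp [frobInner, Matrix.mul_smul] }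

/-- The Grassmann gradient `∇_G E(U) = ∇E(U) - U (Uᵀ ∇E(U))` associated with a gradient
field `gradE`. -/
noncomputable def gradG {m N : ℕ}
    (gradE : Matrix (Fin m) (Fin N) ℝ → Matrix (Fin m) (Fin N) ℝ)
    (U : Matrix (Fin m) (Fin N) ℝ) : Matrix (Fin m) (Fin N) ℝ :=
  gradE U - U * (Uᵀ * gradE U)

open Topology

theorem continuous_frobInner {m N : ℕ} :
    Continuous fun p : Matrix (Fin m) (Fin N) ℝ × Matrix (Fin m) (Fin N) ℝ =>
      frobInner p.1 p.2 := by
  unfold frobInner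
  fun_prop

theorem continuous_frobNorm {m N : ℕ} :
    Continuous (frobNorm : Matrix (Fin m) (Fin N) ℝ → ℝ) := by
  unfold frobNorm
  fun_prop

theorem trace_transpose_mul_self_eq_sum {m N : ℕ} (X : Matrix (Fin m) (Fin N) ℝ) :
    Matrix.trace (Xᵀ * X) = ∑ j, ∑ i, X i j ^ 2 := by
  simp [Matrix.trace, Matrix.mul_apply, pow_two]

theorem abs_apply_le_frobNorm {m N : ℕ} (X : Matrix (Fin m) (Fin N) ℝ) (i : Fin m) (j : Fin N) :
    |X i j| ≤ frobNorm X := by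
  unfold frobNorm
  apply Real.abs_le_sqrt
  rw [trace_transpose_mul_self_eq_sum]
  calc X i j ^ 2 ≤ ∑ i, X i j ^ 2 :=
        Finset.single_le_sum (f := fun i => X i j ^ 2) (fun _ _ => sq_nonneg _) (Finset.mem_univ i)
    _ ≤ ∑ j, ∑ i, X i j ^ 2 :=
        Finset.single_le_sum (f := fun j => ∑ i, X i j ^ 2)
          (fun _ _ => Finset.sum_nonneg fun _ _ => sq_nonneg _) (Finset.mem_univ j)

theorem isCompact_frobNorm_le {m N : ℕ} (R : ℝ) :
    IsCompact {X : Matrix (Fin m) (Fin N) ℝ | frobNorm X ≤ R} := by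
  have : ProperSpace (Matrix (Fin m) (Fin N) ℝ) := FiniteDimensional.proper ℝ _
  apply Metric.isCompact_of_isClosed_isBounded
  · exact isClosed_le continuous_frobNorm continuous_const
  · rw [isBounded_iff_forall_norm_le]
    refine ⟨R, fun X hX => ?_⟩
    have hX' : frobNorm X ≤ R := hX
    have hR : 0 ≤ R := (Real.sqrt_nonneg _).trans hX'
    rw [Matrix.norm_le_iff hR]
    exact fun i j => (abs_apply_le_frobNorm X i j).trans hX'

theorem isCompact_stiefel {m N : ℕ} :
    IsCompact {X : Matrix (Fin m) (Fin N) ℝ | Xᵀ * X = 1} := by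
  refine (isCompact_frobNorm_le (√(Matrix.trace (1 : Matrix (Fin N) (Fin N) ℝ)))).of_isClosed_subset
    (isClosed_eq (by fun_prop) continuous_const) ?_
  intro X hX
  have hX' : Xᵀ * X = 1 := hX
  simp only [Set.mem_ofPred_eq, frobNorm, hX', le_refl]

theorem frobInner_gradG {m N : ℕ} (gradE : Matrix (Fin m) (Fin N) ℝ → Matrix (Fin m) (Fin N) ℝ)
    {V W : Matrix (Fin m) (Fin N) ℝ} (h : Vᵀ * W = 0) :
    frobInner (gradG gradE V) W = frobInner (gradE V) W := by
  simp [frobInner, gradG, Matrix.sub_mul, Matrix.mul_assoc, h]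

theorem continuous_gradG {m N : ℕ}
    {gradE : Matrix (Fin m) (Fin N) ℝ → Matrix (Fin m) (Fin N) ℝ} (h : Continuous gradE) :
    Continuous (gradG gradE) := by
  unfold gradG
  fun_prop

/-- The Zhang–Hager reference values dominate the energies `e`, and decrease by at least
`(1 - α) s n` at each step. -/
theorem zhangHager_le {α : ℝ} (hα : α ∈ Set.Ico (0 : ℝ) 1) {e s Q Cs : ℕ → ℝ}
    (hs : ∀ n, 0 < s n) (hQ0 : Q 0 = 1) (hCs0 : Cs 0 = e 0)
    (hQ : ∀ n, Q (n + 1) = α * Q n + 1)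
    (hCs : ∀ n, Cs (n + 1) = (α * Q n * Cs n + e (n + 1)) / Q (n + 1))
    (hdec : ∀ n, e (n + 1) - Cs n ≤ -s n) :
    (∀ n, e n ≤ Cs n) ∧ ∀ n, (1 - α) * s n ≤ Cs n - Cs (n + 1) := by
  obtain ⟨hα0, hα1⟩ := hα
  have hQpos : ∀ n, 1 ≤ Q n := by
    intro n
    induction n with
    | zero => rw [hQ0]
    | succ n ih => rw [hQ]; nlinarith
  have hQle : ∀ n, (1 - α) * Q n ≤ 1 := by
    intro n
    induction n with
    | zero => rw [hQ0]; linarith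
    | succ n ih => rw [hQ]; nlinarith
  have hC : ∀ n, Q (n + 1) * Cs (n + 1) = α * Q n * Cs n + e (n + 1) := by
    intro n
    have := hQpos (n + 1)
    rw [hCs]
    field_simp
  refine ⟨fun n => ?_, fun n => ?_⟩
  · cases n with
    | zero => rw [hCs0]
    | succ n =>
      -- `Q (n+1) (Cs (n+1) - e (n+1)) = α Q n (Cs n - e (n+1)) ≥ 0`
      have h1 : 0 ≤ α * Q n * (Cs n - e (n + 1)) :=
        mul_nonneg (mul_nonneg hα0 (by linarith [hQpos n])) (by linarith [hdec n, hs n])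
      have h2 : Q (n + 1) * (Cs (n + 1) - e (n + 1)) = α * Q n * (Cs n - e (n + 1)) := by
        rw [mul_sub, hC, hQ]; ring
      have h3 := hQpos (n + 1)
      by_contra! hlt
      nlinarith
  · have h2 : Q (n + 1) * (Cs n - Cs (n + 1)) = Cs n - e (n + 1) := by
      rw [mul_sub, hC, hQ]; ring
    have h3 := hQpos (n + 1)
    have h4 := mul_le_mul_of_nonneg_right (hQle (n + 1)) (hs n).le
    have h5 : Q (n + 1) * ((1 - α) * s n) ≤ Q (n + 1) * (Cs n - Cs (n + 1)) := by
      rw [h2]; linarith [hdec n]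
    exact le_of_mul_le_mul_left h5 (by linarith)

/-- Under the non-monotone decrease condition, energies bounded below force the prescribed
decreases to vanish. -/
theorem zhangHager_tendsto_zero {α : ℝ} (hα : α ∈ Set.Ico (0 : ℝ) 1) {e s Q Cs : ℕ → ℝ}
    (hs : ∀ n, 0 < s n) (hQ0 : Q 0 = 1) (hCs0 : Cs 0 = e 0)
    (hQ : ∀ n, Q (n + 1) = α * Q n + 1)
    (hCs : ∀ n, Cs (n + 1) = (α * Q n * Cs n + e (n + 1)) / Q (n + 1))
    (hdec : ∀ n, e (n + 1) - Cs n ≤ -s n) {B : ℝ} (hB : ∀ n, B ≤ e n) :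
    Tendsto s atTop (𝓝 0) := by
  obtain ⟨hle, hstep⟩ := zhangHager_le hα hs hQ0 hCs0 hQ hCs hdec
  have hα1 : 0 < 1 - α := sub_pos.2 hα.2
  have hanti : Antitone Cs := antitone_nat_of_succ_le fun n => by
    nlinarith [hstep n, mul_pos hα1 (hs n)]
  have hlim := tendsto_atTop_ciInf hanti
    ⟨B, by rintro _ ⟨n, rfl⟩; exact (hB n).trans (hle n)⟩
  have hdiff : Tendsto (fun n => Cs n - Cs (n + 1)) atTop (𝓝 0) := by
    simpa using hlim.sub (hlim.comp (tendsto_add_atTop_nat 1))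
  have hscaled : Tendsto (fun n => (1 - α)⁻¹ * (Cs n - Cs (n + 1))) atTop (𝓝 0) := by
    simpa using hdiff.const_mul (1 - α)⁻¹
  refine squeeze_zero (fun n => (hs n).le) (fun n => ?_) hscaled
  rw [inv_mul_eq_div, le_div_iff₀ hα1, mul_comm]
  exact hstep n

section Curves

variable {m N : ℕ} {E : Matrix (Fin m) (Fin N) ℝ → ℝ}
  {gradE : Matrix (Fin m) (Fin N) ℝ → Matrix (Fin m) (Fin N) ℝ}
  {ortho orthoDt : Matrix (Fin m) (Fin N) ℝ → Matrix (Fin m) (Fin N) ℝ → ℝ →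
      Matrix (Fin m) (Fin N) ℝ}

/-- A trial step that violates the sufficient decrease condition with rate `c` has an earlier point
on the curve at which the slope of the energy exceeds `c`. -/
theorem exists_slope_gt (hEderiv : ∀ U, HasFDerivAt E (frobInnerCLM (gradE U)) U)
    {V W : Matrix (Fin m) (Fin N) ℝ}
    (hderiv : ∀ s : ℝ, HasDerivAt (ortho V W) (orthoDt V W s) s)
    {s c : ℝ} (hs : 0 < s) (h : E (ortho V W 0) + s * c < E (ortho V W s)) :
    ∃ ξ ∈ Set.Ioo 0 s, c < frobInner (gradE (ortho V W ξ)) (orthoDt V W ξ) := by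
  have hd : ∀ x : ℝ, HasDerivAt (fun r => E (ortho V W r))
      (frobInner (gradE (ortho V W x)) (orthoDt V W x)) x :=
    fun x => (hEderiv (ortho V W x)).comp_hasDerivAt x (hderiv x)
  obtain ⟨ξ, hξ, hslope⟩ := exists_hasDerivAt_eq_slope _ _ hs
    (fun x _ => (hd x).continuousAt.continuousWithinAt) (fun x _ => hd x)
  refine ⟨ξ, hξ, ?_⟩
  rw [hslope, lt_div_iff₀ (by linarith)]
  linarith

/-- There is no sequence of feasible points with bounded tangent directions, slopes uniformly
negative, and rejected step sizes tending to zero. -/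
theorem false_of_rejected_steps (hEderiv : ∀ U, HasFDerivAt E (frobInnerCLM (gradE U)) U)
    (hgradcont : Continuous gradE)
    (hzero : ∀ (V W : Matrix (Fin m) (Fin N) ℝ), Vᵀ * V = 1 → Vᵀ * W = 0 →
      ortho V W 0 = V)
    (hderiv : ∀ (V W : Matrix (Fin m) (Fin N) ℝ), Vᵀ * V = 1 → Vᵀ * W = 0 →
      ∀ s : ℝ, HasDerivAt (ortho V W) (orthoDt V W s) s)
    (hderiv0 : ∀ (V W : Matrix (Fin m) (Fin N) ℝ), Vᵀ * V = 1 → Vᵀ * W = 0 →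
      orthoDt V W 0 = W)
    (hcont : ContinuousOn
      (fun p : Matrix (Fin m) (Fin N) ℝ × Matrix (Fin m) (Fin N) ℝ × ℝ =>
        ortho p.1 p.2.1 p.2.2)
      {p | p.1ᵀ * p.1 = 1 ∧ p.1ᵀ * p.2.1 = 0})
    (hcont' : ContinuousOn
      (fun p : Matrix (Fin m) (Fin N) ℝ × Matrix (Fin m) (Fin N) ℝ × ℝ =>
        orthoDt p.1 p.2.1 p.2.2)
      {p | p.1ᵀ * p.1 = 1 ∧ p.1ᵀ * p.2.1 = 0})
    {η γ C : ℝ} (hη : η < 1) (hγ : 0 < γ)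
    {V W : ℕ → Matrix (Fin m) (Fin N) ℝ} {s : ℕ → ℝ}
    (hV : ∀ n, (V n)ᵀ * V n = 1) (hW : ∀ n, (V n)ᵀ * W n = 0) (hWC : ∀ n, frobNorm (W n) ≤ C)
    (hspos : ∀ n, 0 < s n) (hs : Tendsto s atTop (𝓝 0))
    (hslope : ∀ᶠ n in atTop, frobInner (gradE (V n)) (W n) ≤ -γ)
    (hrej : ∀ᶠ n in atTop,
      E (V n) + s n * (η * frobInner (gradE (V n)) (W n)) < E (ortho (V n) (W n) (s n))) :
    False := by
  -- The slope bound is stated as an implication, since rejection is only assumed eventually; for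
  have hex : ∀ n, ∃ ξ, 0 ≤ ξ ∧ ξ ≤ s n ∧
      (E (V n) + s n * (η * frobInner (gradE (V n)) (W n)) < E (ortho (V n) (W n) (s n)) →
        η * frobInner (gradE (V n)) (W n) <
          frobInner (gradE (ortho (V n) (W n) ξ)) (orthoDt (V n) (W n) ξ)) := by
    intro n
    by_cases h : E (V n) + s n * (η * frobInner (gradE (V n)) (W n)) < E (ortho (V n) (W n) (s n))
    · obtain ⟨ξ, hξ, hlt⟩ := exists_slope_gt hEderiv (hderiv (V n) (W n) (hV n) (hW n)) (hspos n)
        (c := η * frobInner (gradE (V n)) (W n)) (by rwa [hzero _ _ (hV n) (hW n)])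
      exact ⟨ξ, hξ.1.le, hξ.2.le, fun _ => hlt⟩
    · exact ⟨0, le_rfl, (hspos n).le, fun h' => absurd h' h⟩
  choose ξ hξ0 hξs hξ using hex
  have hξlim : Tendsto ξ atTop (𝓝 0) := squeeze_zero hξ0 hξs hs
  -- Instance search does not unfold `Matrix` to a function type.
  have : FirstCountableTopology (Matrix (Fin m) (Fin N) ℝ) :=
    inferInstanceAs (FirstCountableTopology (Fin m → Fin N → ℝ))
  obtain ⟨p, -, ψ, hψ, hp⟩ := (isCompact_stiefel.prod (isCompact_frobNorm_le C)).tendsto_subseq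
    (x := fun n => (V n, W n)) fun n => Set.mk_mem_prod (hV n) (hWC n)
  have hVl : Tendsto (fun n => V (ψ n)) atTop (𝓝 p.1) := (continuous_fst.tendsto p).comp hp
  have hWl : Tendsto (fun n => W (ψ n)) atTop (𝓝 p.2) := (continuous_snd.tendsto p).comp hp
  have hψt := hψ.tendsto_atTop
  have hp1 : p.1ᵀ * p.1 = 1 := by
    have hc : Continuous fun X : Matrix (Fin m) (Fin N) ℝ => Xᵀ * X := by fun_prop
    refine tendsto_nhds_unique ((hc.tendsto p.1).comp hVl) ?_
    simp only [Function.comp_def, hV]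
    exact tendsto_const_nhds
  have hp2 : p.1ᵀ * p.2 = 0 := by
    have hc : Continuous fun q : Matrix (Fin m) (Fin N) ℝ × Matrix (Fin m) (Fin N) ℝ =>
      q.1ᵀ * q.2 := by fun_prop
    refine tendsto_nhds_unique ((hc.tendsto p).comp hp) ?_
    simp only [Function.comp_def, hW]
    exact tendsto_const_nhds
  have htriple : Tendsto (fun n => (V (ψ n), W (ψ n), ξ (ψ n))) atTop
      (𝓝[{p | p.1ᵀ * p.1 = 1 ∧ p.1ᵀ * p.2.1 = 0}] (p.1, p.2, (0 : ℝ))) :=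
    tendsto_nhdsWithin_iff.2
      ⟨hVl.prodMk_nhds (hWl.prodMk_nhds (hξlim.comp hψt)),
        Eventually.of_forall fun n => ⟨hV _, hW _⟩⟩
  have ho := (hcont (p.1, p.2, 0) ⟨hp1, hp2⟩).tendsto.comp htriple
  have ho' := (hcont' (p.1, p.2, 0) ⟨hp1, hp2⟩).tendsto.comp htriple
  simp only [hzero _ _ hp1 hp2, hderiv0 _ _ hp1 hp2] at ho ho'
  have hL := (continuous_frobInner.tendsto (gradE p.1, p.2)).comp
    (((hgradcont.tendsto p.1).comp ho).prodMk_nhds ho')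
  have hR := (continuous_frobInner.tendsto (gradE p.1, p.2)).comp
    (((hgradcont.tendsto p.1).comp hVl).prodMk_nhds hWl)
  have h1 : η * frobInner (gradE p.1) p.2 ≤ frobInner (gradE p.1) p.2 := by
    refine le_of_tendsto_of_tendsto (hR.const_mul η) hL ?_
    filter_upwards [hψt.eventually hrej] with n hn
    exact (hξ (ψ n) hn).le
  have h2 : frobInner (gradE p.1) p.2 ≤ -γ :=
    le_of_tendsto hR (hψt.eventually hslope)
  nlinarith

end Curves

/-- Convergence of the backtracking-based line search method with orthogonality
constraints (Theorem 2.2 of the paper), on the matrix Stiefel manifold. -/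
theorem backtracking_linesearch_convergence
    (m N : ℕ) (hm : 0 < m) (hN : 0 < N)
    (E : Matrix (Fin m) (Fin N) ℝ → ℝ)
    (gradE : Matrix (Fin m) (Fin N) ℝ → Matrix (Fin m) (Fin N) ℝ)
    -- `E` is continuously differentiable with gradient `gradE` w.r.t. the Frobenius
    -- inner product:
    (hEderiv : ∀ U, HasFDerivAt E (frobInnerCLM (gradE U)) U)
    (hgradcont : Continuous gradE)
    -- the retraction-type map `ortho` and its time derivative `orthoDt`:
    (ortho orthoDt : Matrix (Fin m) (Fin N) ℝ → Matrix (Fin m) (Fin N) ℝ → ℝ →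
      Matrix (Fin m) (Fin N) ℝ)
    (hfeas : ∀ (V W : Matrix (Fin m) (Fin N) ℝ) (s : ℝ), Vᵀ * V = 1 → Vᵀ * W = 0 →
      (ortho V W s)ᵀ * ortho V W s = 1)
    (hzero : ∀ (V W : Matrix (Fin m) (Fin N) ℝ), Vᵀ * V = 1 → Vᵀ * W = 0 →
      ortho V W 0 = V)
    (hderiv : ∀ (V W : Matrix (Fin m) (Fin N) ℝ), Vᵀ * V = 1 → Vᵀ * W = 0 →
      ∀ s : ℝ, HasDerivAt (ortho V W) (orthoDt V W s) s)
    (hderiv0 : ∀ (V W : Matrix (Fin m) (Fin N) ℝ), Vᵀ * V = 1 → Vᵀ * W = 0 →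
      orthoDt V W 0 = W)
    (hcont : ContinuousOn
      (fun p : Matrix (Fin m) (Fin N) ℝ × Matrix (Fin m) (Fin N) ℝ × ℝ =>
        ortho p.1 p.2.1 p.2.2)
      {p | p.1ᵀ * p.1 = 1 ∧ p.1ᵀ * p.2.1 = 0})
    (hcont' : ContinuousOn
      (fun p : Matrix (Fin m) (Fin N) ℝ × Matrix (Fin m) (Fin N) ℝ × ℝ =>
        orthoDt p.1 p.2.1 p.2.2)
      {p | p.1ᵀ * p.1 = 1 ∧ p.1ᵀ * p.2.1 = 0})
    -- parameters:
    (η α k tmin : ℝ) (hη : η ∈ Set.Ioo (0 : ℝ) 1) (hα : α ∈ Set.Ico (0 : ℝ) 1)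
    (hk : k ∈ Set.Ioo (0 : ℝ) 1) (htmin : 0 < tmin)
    -- the iterates:
    (U D : ℕ → Matrix (Fin m) (Fin N) ℝ) (t : ℕ → ℝ)
    (hUfeas : ∀ n, (U n)ᵀ * U n = 1)
    (hDtan : ∀ n, (U n)ᵀ * D n = 0)
    (htpos : ∀ n, 0 < t n)
    (hupdate : ∀ n, U (n + 1) = ortho (U n) (D n) (t n))
    -- descent directions:
    (hdesc : ∀ n, frobInner (gradG gradE (U n)) (D n) < 0)
    -- gradient-relatedness along a subsequence, with bounded directions:
    (hrelated : ∃ (a δ C : ℝ) (φ : ℕ → ℕ), 0 < a ∧ 0 < δ ∧ 0 < C ∧ StrictMono φ ∧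
      Tendsto (fun j =>
          -frobInner (gradG gradE (U (φ j))) (D (φ j)) /
            frobNorm (gradG gradE (U (φ j))) ^ a) atTop (nhds δ) ∧
      ∀ j, frobNorm (D (φ j)) ≤ C)
    -- the Zhang–Hager non-monotone quantities:
    (Q Cs : ℕ → ℝ)
    (hQ0 : Q 0 = 1) (hCs0 : Cs 0 = E (U 0))
    (hQ : ∀ n : ℕ, Q (n + 1) = α * Q n + 1)
    (hCs : ∀ n : ℕ, Cs (n + 1) = (α * Q n * Cs n + E (U (n + 1))) / Q (n + 1))
    -- the non-monotone Armijo condition: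
    (harmijo : ∀ n, E (ortho (U n) (D n) (t n)) - Cs n ≤
      η * t n * frobInner (gradG gradE (U n)) (D n))
    -- the outcome of backtracking: either no backtracking occurred, or the last
    -- rejected trial step `t n / k` fails the non-monotone Armijo condition:
    (hback : ∀ n, tmin ≤ t n ∨
      E (ortho (U n) (D n) (t n / k)) - Cs n >
        η * (t n / k) * frobInner (gradG gradE (U n)) (D n)) :
    (∃ n, gradG gradE (U n) = 0) ∨
      liminf (fun n => frobNorm (gradG gradE (U n))) atTop = 0 := by
  right
  obtain ⟨a, δ, C, φ, ha, hδ, -, hφ, hrel, hDC⟩ := hrelated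
  set G : ℕ → ℝ := fun n => frobNorm (gradG gradE (U n)) with hG
  have hG0 : ∀ n, 0 ≤ G n := fun n => Real.sqrt_nonneg _
  -- Boundedness of `G` keeps the real-valued `liminf` from taking its junk value.
  obtain ⟨M, hM⟩ := isCompact_stiefel.bddAbove_image
    (continuous_frobNorm.comp (continuous_gradG hgradcont)).continuousOn
  have hGM : ∀ n, G n ≤ M := fun n => hM ⟨U n, hUfeas n, rfl⟩
  have hcob : IsCoboundedUnder (· ≥ ·) atTop G :=
    (isBoundedUnder_of ⟨M, hGM⟩ : IsBoundedUnder (· ≤ ·) atTop G).isCoboundedUnder_ge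
  have hbdd : IsBoundedUnder (· ≥ ·) atTop G := isBoundedUnder_of ⟨0, hG0⟩
  refine le_antisymm (le_of_forall_pos_le_add fun ε hε => ?_)
    (le_liminf_of_le hcob (Eventually.of_forall hG0))
  rw [zero_add]
  refine liminf_le_of_frequently_le ?_ hbdd
  by_contra hnot
  have hlarge : ∀ᶠ n in atTop, ε < G n := by simpa [Filter.Frequently] using hnot
  have hEcont : Continuous E := continuous_iff_continuousAt.2 fun V => (hEderiv V).continuousAt
  obtain ⟨B, hB⟩ := isCompact_stiefel.bddBelow_image hEcont.continuousOn
  have hBE : ∀ n, B ≤ E (U n) := fun n => hB ⟨U n, hUfeas n, rfl⟩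
  have hspos : ∀ n, 0 < η * t n * -frobInner (gradG gradE (U n)) (D n) := fun n =>
    mul_pos (mul_pos hη.1 (htpos n)) (neg_pos.2 (hdesc n))
  have hdec : ∀ n, E (U (n + 1)) - Cs n ≤ -(η * t n * -frobInner (gradG gradE (U n)) (D n)) := by
    intro n
    rw [hupdate]
    linarith [harmijo n]
  have hECs := (zhangHager_le hα (e := fun n => E (U n)) hspos hQ0 hCs0 hQ hCs hdec).1
  have hlim := zhangHager_tendsto_zero hα (e := fun n => E (U n)) hspos hQ0 hCs0 hQ hCs hdec hBE
  have hφt := hφ.tendsto_atTop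
  set γ : ℝ := δ / 2 * ε ^ a with hγdef
  have hγ : 0 < γ := by positivity
  have hslope : ∀ᶠ j in atTop, frobInner (gradG gradE (U (φ j))) (D (φ j)) ≤ -γ := by
    filter_upwards [hφt.eventually hlarge, hrel.eventually_const_lt (half_lt_self hδ)] with j h1 h2
    have hpos : 0 < G (φ j) ^ a := Real.rpow_pos_of_pos (hε.trans h1) a
    have h3 : ε ^ a ≤ G (φ j) ^ a := Real.rpow_le_rpow hε.le h1.le ha.le
    have h4 := (lt_div_iff₀ hpos).1 h2
    have h5 : γ ≤ δ / 2 * G (φ j) ^ a := mul_le_mul_of_nonneg_left h3 (by positivity)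
    linarith
  have htlim : Tendsto (fun j => t (φ j)) atTop (𝓝 0) := by
    have hscaled : Tendsto (fun j => (η * γ)⁻¹ *
        (η * t (φ j) * -frobInner (gradG gradE (U (φ j))) (D (φ j)))) atTop (𝓝 0) := by
      simpa using (hlim.comp hφt).const_mul (η * γ)⁻¹
    refine squeeze_zero' (Eventually.of_forall fun j => (htpos _).le) ?_ hscaled
    filter_upwards [hslope] with j hj
    have hηγ : 0 < η * γ := mul_pos hη.1 hγ
    rw [inv_mul_eq_div, le_div_iff₀ hηγ]
    have := mul_le_mul_of_nonneg_left (le_neg_of_le_neg hj) (mul_pos hη.1 (htpos (φ j))).le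
    linarith
  have hrej : ∀ᶠ j in atTop, E (U (φ j)) +
      t (φ j) / k * (η * frobInner (gradE (U (φ j))) (D (φ j))) <
        E (ortho (U (φ j)) (D (φ j)) (t (φ j) / k)) := by
    filter_upwards [htlim.eventually_lt_const htmin] with j hj
    have h := (hback (φ j)).resolve_left (not_le.2 hj)
    rw [frobInner_gradG gradE (hDtan _)] at h
    have h2 : E (U (φ j)) ≤ Cs (φ j) := hECs (φ j)
    linarith
  refine false_of_rejected_steps hEderiv hgradcont hzero hderiv hderiv0 hcont hcont' hη.2 hγ
    (V := fun j => U (φ j)) (W := fun j => D (φ j)) (s := fun j => t (φ j) / k)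
    (fun _ => hUfeas _) (fun _ => hDtan _) hDC (fun _ => div_pos (htpos _) hk.1)
    (by simpa using htlim.div_const k) ?_ hrej
  filter_upwards [hslope] with j hj
  rwa [frobInner_gradG gradE (hDtan _)] at hj
end

section
/- Let H be a real inner product space, let α ∈ [0,1) and η ∈ (0,1), let (g_n) and (D_n) be sequences in H, (t_n) a sequence of positive reals, and (E_n) a sequence of reals that is bounded below. Define Q_0 = 1, C_0 = E_0, and for n ≥ 1, Q_n = α·Q_{n−1} + 1 and C_n = (α·Q_{n−1}·C_{n−1} + E_n)/Q_n. Assume: (i) ⟨g_n, D_n⟩ < 0 for all n; (ii) E_{n+1} − C_n ≤ η·t_n·⟨g_n, D_n⟩ for all n; (iii) there exist a > 0, δ > 0 and a strictly increasing sequence of indices (n_j) such that lim_{j→∞} (−⟨g_{n_j}, D_{n_j}⟩ / ‖g_{n_j}‖^a) = δ and the series ∑_j t_{n_j} diverges to +∞. Then liminf_{n→∞} ‖g_n‖ = 0. -/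
/-!
The weights satisfy `1 ≤ Q n ≤ 1 / (1 - α)`, and the averaging recursion can be rewritten as
`C (n + 1) - C n = (E (n + 1) - C n) / Q (n + 1)`. Hence the descent condition gives
`C n - C (n + 1) ≥ (1 - α) η t n (-⟪g n, D n⟫)`. As a running convex combination of values of `E`,
the sequence `C` is bounded below, so telescoping shows that `∑ t n (-⟪g n, D n⟫)` converges
(`summable_step_mul`). If `‖g n‖ ≥ ε > 0` eventually, then eventually along the
subsequence `-⟪g n, D n⟫ ≥ (δ / 2) ε ^ a`, and `∑ t (φ j)` would converge as well.
-/

open Filter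
open scoped RealInnerProductSpace

/-- With `p n` the decrease rate `-⟪g n, D n⟫`, telescoping the averaged values `C n` makes
`∑ t n * p n` converge. -/
lemma summable_step_mul {α η m : ℝ} (hα0 : 0 ≤ α) (hα1 : α < 1) (hη : 0 < η)
    {p t E Q C : ℕ → ℝ} (hp : ∀ n, 0 < p n) (ht : ∀ n, 0 < t n) (hm : ∀ n, m ≤ E n)
    (hQ0 : Q 0 = 1) (hC0 : C 0 = E 0) (hQ : ∀ n, Q (n + 1) = α * Q n + 1)
    (hC : ∀ n, C (n + 1) = (α * Q n * C n + E (n + 1)) / Q (n + 1))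
    (harmijo : ∀ n, E (n + 1) - C n ≤ -(η * t n * p n)) :
    Summable fun n => t n * p n := by
  have hQ1 : ∀ n, 1 ≤ Q n := by
    intro n
    induction n with
    | zero => exact hQ0.ge
    | succ k ih => rw [hQ]; nlinarith
  have hQ2 : ∀ n, (1 - α) * Q n ≤ 1 := by
    intro n
    induction n with
    | zero => rw [hQ0]; linarith
    | succ k ih => rw [hQ]; nlinarith
  have hCm : ∀ n, m ≤ C n := by
    intro n
    induction n with
    | zero => rw [hC0]; exact hm 0
    | succ k ih =>
      rw [hC, le_div_iff₀ (by linarith [hQ1 (k + 1)]), hQ]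
      have h : 0 ≤ α * Q k := mul_nonneg hα0 (by linarith [hQ1 k])
      nlinarith [hm (k + 1), mul_le_mul_of_nonneg_left ih h]
  have hstep : ∀ n, (1 - α) * η * (t n * p n) ≤ C n - C (n + 1) := by
    intro n
    have hpos : 0 < Q (n + 1) := by linarith [hQ1 (n + 1)]
    have hrec : (C n - C (n + 1)) * Q (n + 1) = C n - E (n + 1) := by
      have h : C (n + 1) * Q (n + 1) = α * Q n * C n + E (n + 1) := by
        rw [hC n]; field_simp
      rw [sub_mul, h, hQ]; ring
    have hx : 0 < η * (t n * p n) := mul_pos hη (mul_pos (ht n) (hp n))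
    refine le_of_mul_le_mul_right ?_ hpos
    rw [hrec]
    nlinarith [harmijo n, mul_le_mul_of_nonneg_right (hQ2 (n + 1)) hx.le]
  have hK : 0 < (1 - α) * η := mul_pos (by linarith) hη
  refine summable_of_sum_range_le (c := (C 0 - m) / ((1 - α) * η))
    (fun n => (mul_pos (ht n) (hp n)).le) fun N => ?_
  rw [le_div_iff₀ hK, mul_comm, Finset.mul_sum]
  calc _ ≤ ∑ n ∈ Finset.range N, (C n - C (n + 1)) := Finset.sum_le_sum fun n _ => hstep n
    _ = C 0 - C N := Finset.sum_range_sub' C N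
    _ ≤ C 0 - m := by linarith [hCm N]

/-- Variant of the main convergence theorem (Remark 2.4): the lower bound on the step
sizes is replaced by divergence of the step-size series along a subsequence on which the
direction/gradient ratio has a positive limit. -/
theorem adaptive_linesearch_abstract_convergence_subseq
    {H : Type*} [NormedAddCommGroup H] [InnerProductSpace ℝ H]
    (α η : ℝ) (hα : α ∈ Set.Ico (0 : ℝ) 1) (hη : η ∈ Set.Ioo (0 : ℝ) 1)
    (g D : ℕ → H) (t : ℕ → ℝ) (E : ℕ → ℝ)
    (ht : ∀ n, 0 < t n) (hEbdd : BddBelow (Set.range E))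
    (Q C : ℕ → ℝ)
    (hQ0 : Q 0 = 1) (hC0 : C 0 = E 0)
    (hQ : ∀ n : ℕ, Q (n + 1) = α * Q n + 1)
    (hC : ∀ n : ℕ, C (n + 1) = (α * Q n * C n + E (n + 1)) / Q (n + 1))
    (hdesc : ∀ n, ⟪g n, D n⟫ < 0)
    (harmijo : ∀ n, E (n + 1) - C n ≤ η * t n * ⟪g n, D n⟫)
    (hsub : ∃ (a δ : ℝ) (φ : ℕ → ℕ), 0 < a ∧ 0 < δ ∧ StrictMono φ ∧
      Tendsto (fun j => -⟪g (φ j), D (φ j)⟫ / ‖g (φ j)‖ ^ a) atTop (nhds δ) ∧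
      Tendsto (fun J => ∑ j ∈ Finset.range J, t (φ j)) atTop atTop) :
    liminf (fun n => ‖g n‖) atTop = 0 := by
  obtain ⟨m, hm⟩ := hEbdd
  obtain ⟨a, δ, φ, ha, hδ, hφ, hlim, hdiv⟩ := hsub
  have hsum : Summable fun n => t n * -⟪g n, D n⟫ :=
    summable_step_mul hα.1 hα.2 hη.1 (fun n => neg_pos.2 (hdesc n)) ht
      (fun n => hm ⟨n, rfl⟩) hQ0 hC0 hQ hC (fun n => by linarith [harmijo n])
  have key : ∀ ε : ℝ, (∀ᶠ n in atTop, ε ≤ ‖g n‖) → ε ≤ 0 := by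
    intro ε hε
    by_contra! hpos
    have hc : 0 < δ / 2 * ε ^ a := mul_pos (half_pos hδ) (Real.rpow_pos_of_pos hpos a)
    have hle : ∀ᶠ j in atTop, δ / 2 * ε ^ a * t (φ j) ≤ t (φ j) * -⟪g (φ j), D (φ j)⟫ := by
      filter_upwards [hlim.eventually (lt_mem_nhds (half_lt_self hδ)),
        hφ.tendsto_atTop.eventually hε] with j h1 h2
      have hgpos : 0 < ‖g (φ j)‖ ^ a := Real.rpow_pos_of_pos (hpos.trans_le h2) a
      rw [lt_div_iff₀ hgpos] at h1
      have h3 : ε ^ a ≤ ‖g (φ j)‖ ^ a := Real.rpow_le_rpow hpos.le h2 ha.le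
      rw [mul_comm]
      refine mul_le_mul_of_nonneg_left ?_ (ht _).le
      exact (mul_le_mul_of_nonneg_left h3 (half_pos hδ).le).trans h1.le
    have hs : Summable fun j => δ / 2 * ε ^ a * t (φ j) := by
      refine Summable.of_norm_bounded_eventually_nat (hsum.comp_injective hφ.injective) ?_
      filter_upwards [hle] with j hj
      rwa [Real.norm_of_nonneg (mul_pos hc (ht _)).le]
    exact (not_summable_iff_tendsto_nat_atTop_of_nonneg fun j => (ht (φ j)).le).2 hdiv
      ((summable_mul_left_iff hc.ne').1 hs)
  -- By `key`, the set of eventual lower bounds whose supremum is the liminf has maximum `0`.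
  rw [liminf_eq]
  exact IsGreatest.csSup_eq ⟨Eventually.of_forall fun n => norm_nonneg _, fun ε hε => key ε hε⟩
end

section
/- Let H be a real inner product space, let α ∈ [0,1) and η ∈ (0,1), let (g_n) and (D_n) be sequences in H, (t_n) a sequence of positive reals, and (E_n) a sequence of reals that is bounded below. Define Q_0 = 1, C_0 = E_0, and for n ≥ 1, Q_n = α·Q_{n−1} + 1 and C_n = (α·Q_{n−1}·C_{n−1} + E_n)/Q_n. Assume ⟨g_n, D_n⟩ < 0 for all n and E_{n+1} − C_n ≤ η·t_n·⟨g_n, D_n⟩ for all n. Then the series ∑_{n=0}^∞ t_n·(−⟨g_n, D_n⟩) of nonnegative terms converges (i.e., the sequence n ↦ t_n·(−⟨g_n, D_n⟩) is summable). -/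
/-!
The sequence `C` is a Lyapunov function. Since `Q (n + 1) = α * Q n + 1`, each step satisfies
`C n - C (n + 1) = (C n - E (n + 1)) / Q (n + 1)`. The Armijo condition bounds the numerator
below by `η` times the `n`-th term of the series, and `Q (n + 1) ≤ 1 / (1 - α)`, so `C` decreases
by at least `(1 - α) * η` times that term. As an average of values of `E`, `C` is bounded below,
so telescoping bounds the partial sums of the nonnegative series.
-/

open Filter
open scoped RealInnerProductSpace

/-- Key summability estimate from the proof of Theorem 2.1: under the non-monotone
Armijo-type condition with descent directions and objective values bounded below,
the weighted descent quantities are summable. -/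
theorem nonmonotone_armijo_summable
    {H : Type*} [NormedAddCommGroup H] [InnerProductSpace ℝ H]
    (α η : ℝ) (hα : α ∈ Set.Ico (0 : ℝ) 1) (hη : η ∈ Set.Ioo (0 : ℝ) 1)
    (g D : ℕ → H) (t : ℕ → ℝ) (E : ℕ → ℝ)
    (ht : ∀ n, 0 < t n) (hEbdd : BddBelow (Set.range E))
    (Q C : ℕ → ℝ)
    (hQ0 : Q 0 = 1) (hC0 : C 0 = E 0)
    (hQ : ∀ n : ℕ, Q (n + 1) = α * Q n + 1)
    (hC : ∀ n : ℕ, C (n + 1) = (α * Q n * C n + E (n + 1)) / Q (n + 1))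
    (hdesc : ∀ n, ⟪g n, D n⟫ < 0)
    (harmijo : ∀ n, E (n + 1) - C n ≤ η * t n * ⟪g n, D n⟫) :
    Summable (fun n => t n * (-⟪g n, D n⟫)) := by
  obtain ⟨hα0, hα1⟩ := hα
  obtain ⟨hη0, -⟩ := hη
  obtain ⟨m, hm⟩ := hEbdd
  have hEm : ∀ n, m ≤ E n := fun n => hm ⟨n, rfl⟩
  have hα' : 0 < 1 - α := by linarith
  have hQ_pos : ∀ n, 0 < Q n := by
    intro n
    induction n with
    | zero => rw [hQ0]; exact one_pos
    | succ n ih => rw [hQ]; positivity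
  -- `Q n` is a partial sum of the geometric series with sum `1 / (1 - α)`.
  have hQ_le : ∀ n, (1 - α) * Q n ≤ 1 := by
    intro n
    induction n with
    | zero => rw [hQ0]; linarith
    | succ n ih => rw [hQ]; nlinarith [mul_le_mul_of_nonneg_left ih hα0]
  -- `C (n + 1)` is a convex combination of `C n` and `E (n + 1)`.
  have hC_ge : ∀ n, m ≤ C n := by
    intro n
    induction n with
    | zero => rw [hC0]; exact hEm 0
    | succ n ih =>
      rw [hC, le_div_iff₀ (hQ_pos _), hQ]
      have h := mul_le_mul_of_nonneg_left ih (mul_nonneg hα0 (hQ_pos n).le)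
      linarith [hEm (n + 1)]
  have ha : ∀ n, 0 ≤ t n * (-⟪g n, D n⟫) := fun n =>
    mul_nonneg (ht n).le (neg_nonneg.mpr (hdesc n).le)
  have hstep : ∀ n, (1 - α) * η * (t n * (-⟪g n, D n⟫)) ≤ C n - C (n + 1) := by
    intro n
    have hdiff : C n - C (n + 1) = (C n - E (n + 1)) / Q (n + 1) := by
      have hne := (hQ_pos (n + 1)).ne'
      rw [hC, eq_div_iff hne, sub_mul, div_mul_cancel₀ _ hne, hQ]
      ring
    rw [hdiff, le_div_iff₀ (hQ_pos _)]
    have h := mul_le_mul_of_nonneg_right (hQ_le (n + 1)) (mul_nonneg hη0.le (ha n))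
    linarith [harmijo n]
  have hc : 0 < (1 - α) * η := mul_pos hα' hη0
  refine summable_of_sum_range_le (c := (C 0 - m) / ((1 - α) * η)) ha fun N => ?_
  rw [le_div_iff₀' hc, Finset.mul_sum]
  calc ∑ n ∈ Finset.range N, (1 - α) * η * (t n * (-⟪g n, D n⟫))
      ≤ ∑ n ∈ Finset.range N, (C n - C (n + 1)) := Finset.sum_le_sum fun n _ => hstep n
    _ = C 0 - C N := Finset.sum_range_sub' C N
    _ ≤ C 0 - m := sub_le_sub_left (hC_ge N) _
end

section
/- Let α ∈ [0,1) and let (E_n) be a real sequence. Define Q_0 = 1, C_0 = E_0, and for n ≥ 1, Q_n = α·Q_{n−1} + 1 and C_n = (α·Q_{n−1}·C_{n−1} + E_n)/Q_n. If E_{n+1} ≤ C_n for all n ≥ 0, then C_n ≥ E_n for all n ≥ 0. -/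
/-- Non-monotonicity property from Remark 2.3: the averaged reference value `C n`
dominates the current objective value `E n` whenever each new objective value does not
exceed the previous averaged reference value. -/
theorem zhang_hager_average_dominates
    (α : ℝ) (hα : α ∈ Set.Ico (0 : ℝ) 1) (E Q C : ℕ → ℝ)
    (hQ0 : Q 0 = 1) (hC0 : C 0 = E 0)
    (hQ : ∀ n : ℕ, Q (n + 1) = α * Q n + 1)
    (hC : ∀ n : ℕ, C (n + 1) = (α * Q n * C n + E (n + 1)) / Q (n + 1))
    (hEC : ∀ n : ℕ, E (n + 1) ≤ C n) :
    ∀ n : ℕ, E n ≤ C n := by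
  have hQpos : ∀ n, 0 < Q n := by
    intro n
    induction n with
    | zero => rw [hQ0]; exact one_pos
    | succ k ih => rw [hQ k]; linarith [mul_nonneg hα.1 ih.le]
  intro n
  cases n with
  | zero => exact hC0.ge
  | succ k =>
    -- `C (k + 1)` is the average of `C k` and `E (k + 1)` with weights `α * Q k` and `1`,
    -- whose total is `Q (k + 1)`; it is thus at least the smaller of the two, `E (k + 1)`.
    rw [hC k, le_div_iff₀ (hQpos (k + 1)), hQ k]
    linarith [mul_le_mul_of_nonneg_left (hEC k) (mul_nonneg hα.1 (hQpos k).le)]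
end

section
/- Fix positive integers m, N and t ∈ ℝ. Let U, A be m×N real matrices and B, S be N×N real matrices such that UᵀU = I_N, AᵀA = I_N, UᵀA = 0, BᵀB = I_N, and S is the diagonal matrix with diagonal entries s_1, …, s_N. Let Sin(St) and Cos(St) denote the N×N diagonal matrices with diagonal entries sin(s_i·t) and cos(s_i·t) respectively, and define the linear map τ(D̃) = (−U·B·Sin(St)·Aᵀ + A·Cos(St)·Aᵀ + (I − A·Aᵀ))·D̃ on m×N matrices, where I is the m×m identity. Then for every m×N real matrix D̃ with Uᵀ·D̃ = 0, tr((τ(D̃))ᵀ·τ(D̃)) = tr(D̃ᵀ·D̃), i.e., the parallel mapping τ preserves the Frobenius norm of tangent vectors. -/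
/-!
Put `W = U * B`, `Y = Aᵀ * D'` and `R = D' - A * Y`. The columns of `W` are orthonormal, those of
`W`, `A` and `R` are mutually orthogonal, and `D' = A * Y + R`. The parallel mapping fixes `R` and
sends `A * Y` to `-(W * Sin * Y) + A * Cos * Y`, so by Pythagoras (`gram_of_orthogonal`, applied
before and after the mapping) the claim reduces to
`(Sin * Y)ᵀ * (Sin * Y) + (Cos * Y)ᵀ * (Cos * Y) = Yᵀ * Y`, which is `sin² + cos² = 1` on the
diagonal. In fact the whole Gram matrix `D'ᵀ * D'` is preserved, not just its trace.
-/

open Matrix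

/-- Pythagoras for Gram matrices: if `W` and `A` have orthonormal columns and the column spaces
of `W`, `A`, `R` are mutually orthogonal, the cross terms of the Gram matrix vanish. -/
lemma gram_of_orthogonal {m N : ℕ} {W A R : Matrix (Fin m) (Fin N) ℝ}
    (X Z : Matrix (Fin N) (Fin N) ℝ)
    (hW : Wᵀ * W = 1) (hA : Aᵀ * A = 1) (hWA : Wᵀ * A = 0) (hWR : Wᵀ * R = 0)
    (hAR : Aᵀ * R = 0) :
    (-(W * X) + A * Z + R)ᵀ * (-(W * X) + A * Z + R) = Xᵀ * X + Zᵀ * Z + Rᵀ * R := by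
  have hAW : Aᵀ * W = 0 := by simpa using congrArg transpose hWA
  have hRW : Rᵀ * W = 0 := by simpa using congrArg transpose hWR
  have hRA : Rᵀ * A = 0 := by simpa using congrArg transpose hAR
  have e (P Q : Matrix (Fin m) (Fin N) ℝ) (T V : Matrix (Fin N) (Fin N) ℝ) :
      (P * T)ᵀ * (Q * V) = Tᵀ * (Pᵀ * Q) * V := by
    simp only [transpose_mul, Matrix.mul_assoc]
  have e₁ (P : Matrix (Fin m) (Fin N) ℝ) (T : Matrix (Fin N) (Fin N) ℝ) :
      (P * T)ᵀ * R = Tᵀ * (Pᵀ * R) := by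
    simp only [transpose_mul, Matrix.mul_assoc]
  have e₂ (P : Matrix (Fin m) (Fin N) ℝ) (T : Matrix (Fin N) (Fin N) ℝ) :
      Rᵀ * (P * T) = Rᵀ * P * T := by
    simp only [Matrix.mul_assoc]
  simp only [transpose_add, transpose_neg, Matrix.add_mul, Matrix.mul_add, Matrix.neg_mul,
    Matrix.mul_neg, e, e₁, e₂, hW, hA, hWA, hWR, hAR, hAW, hRW, hRA, Matrix.mul_zero,
    Matrix.zero_mul, Matrix.mul_one]
  abel

lemma gram_sin_add_gram_cos {N : ℕ} (θ : Fin N → ℝ) (Y : Matrix (Fin N) (Fin N) ℝ) :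
    (diagonal (fun i => Real.sin (θ i)) * Y)ᵀ * (diagonal (fun i => Real.sin (θ i)) * Y)
      + (diagonal (fun i => Real.cos (θ i)) * Y)ᵀ * (diagonal (fun i => Real.cos (θ i)) * Y)
      = Yᵀ * Y := by
  ext i j
  simp only [Matrix.add_apply, Matrix.mul_apply, transpose_apply,
    ← Finset.sum_add_distrib, diagonal_apply, ite_mul, zero_mul, Finset.sum_ite_eq,
    Finset.mem_univ, if_true]
  refine Finset.sum_congr rfl fun k _ => ?_
  linear_combination (Y k i * Y k j) * Real.sin_sq_add_cos_sq (θ k)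

/-- Property (3.7): the parallel mapping along a geodesic on the Grassmann manifold is an
isometry of the tangent space with respect to the Frobenius norm. -/
theorem parallel_mapping_isometry
    (m N : ℕ) (hm : 0 < m) (hN : 0 < N) (t : ℝ)
    (U A : Matrix (Fin m) (Fin N) ℝ) (B : Matrix (Fin N) (Fin N) ℝ) (s : Fin N → ℝ)
    (hU : Uᵀ * U = 1) (hA : Aᵀ * A = 1) (hUA : Uᵀ * A = 0) (hB : Bᵀ * B = 1)
    (D' : Matrix (Fin m) (Fin N) ℝ) (hD' : Uᵀ * D' = 0) :
    Matrix.trace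
        ((((-(U * B * Matrix.diagonal (fun i => Real.sin (s i * t)) * Aᵀ)
              + A * Matrix.diagonal (fun i => Real.cos (s i * t)) * Aᵀ
              + (1 - A * Aᵀ)) * D')ᵀ)
          * ((-(U * B * Matrix.diagonal (fun i => Real.sin (s i * t)) * Aᵀ)
              + A * Matrix.diagonal (fun i => Real.cos (s i * t)) * Aᵀ
              + (1 - A * Aᵀ)) * D'))
      = Matrix.trace (D'ᵀ * D') := by
  have hW : (U * B)ᵀ * (U * B) = 1 := by
    rw [transpose_mul, Matrix.mul_assoc, ← Matrix.mul_assoc Uᵀ, hU, Matrix.one_mul, hB]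
  have hWA : (U * B)ᵀ * A = 0 := by
    rw [transpose_mul, Matrix.mul_assoc, hUA, Matrix.mul_zero]
  have hWR : (U * B)ᵀ * (D' - A * (Aᵀ * D')) = 0 := by
    rw [Matrix.mul_sub, ← Matrix.mul_assoc _ A, hWA, transpose_mul, Matrix.mul_assoc, hD']
    simp
  have hAR : Aᵀ * (D' - A * (Aᵀ * D')) = 0 := by
    rw [Matrix.mul_sub, ← Matrix.mul_assoc _ A, hA, Matrix.one_mul, sub_self]
  have hτ : (-(U * B * Matrix.diagonal (fun i => Real.sin (s i * t)) * Aᵀ)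
        + A * Matrix.diagonal (fun i => Real.cos (s i * t)) * Aᵀ + (1 - A * Aᵀ)) * D'
      = -(U * B * (Matrix.diagonal (fun i => Real.sin (s i * t)) * (Aᵀ * D')))
        + A * (Matrix.diagonal (fun i => Real.cos (s i * t)) * (Aᵀ * D'))
        + (D' - A * (Aᵀ * D')) := by
    simp only [Matrix.add_mul, Matrix.neg_mul, Matrix.sub_mul, Matrix.one_mul, Matrix.mul_assoc]
  have hD : D'ᵀ * D' = (Aᵀ * D')ᵀ * (Aᵀ * D')
      + (D' - A * (Aᵀ * D'))ᵀ * (D' - A * (Aᵀ * D')) := by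
    simpa using gram_of_orthogonal 0 (Aᵀ * D') hW hA hWA hWR hAR
  rw [hτ, gram_of_orthogonal _ _ hW hA hWA hWR hAR,
    gram_sin_add_gram_cos (fun i => s i * t) (Aᵀ * D'), ← hD]
end
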